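/- Let F be a finite field with q elements and let μ ∈ F[X] be a monic polynomial of degree d ≥ 1. If g is sampled uniformly at random from the quotient ring R = F[X]/(μ) (equivalently, uniformly among polynomials of degree < d), then Pr[gcd(g, μ) = 1] ≥ 1/(6⌈log_q d⌉). -/

import Mathlib

/-!
Among the polynomials of degree `< n`, those divisible by `p` and by none of finitely many other
polynomials prime to `p` are `p` times the polynomials of degree `< n - deg p` divisible by none of
the others.  Hence sieving by the distinct prime factors `p` of `μ` gives the probability exactly:
it is `∏ (1 - q⁻ᵈᵉᵍ ᵖ)`.  There are at most `q ^ j / j` such factors of degree `j`, because all of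
them divide `X ^ q ^ j - X`.  With `L = ⌈log_q deg μ⌉`, the factors of degree at most `L` thus
contribute at least `(1 - 1 / q) ^ q ≥ 1 / 4` in degree `1` and `1 - 1 / j` in each degree
`j ≥ 2`, in total `1 / (4 * L)` by telescoping.  The degrees of the remaining factors add up to at
most `deg μ ≤ q ^ L`, so these are few enough to cost only a further factor `3 / 4`.
-/

open Finset Polynomial UniqueFactorizationMonoid

section ProductBounds

theorem one_sub_sum_le_prod_one_sub {ι R : Type*} [CommRing R] [LinearOrder R]
    [IsStrictOrderedRing R] {s : Finset ι} {x : ι → R} (h0 : ∀ i ∈ s, 0 ≤ x i)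
    (h1 : ∀ i ∈ s, x i ≤ 1) : 1 - ∑ i ∈ s, x i ≤ ∏ i ∈ s, (1 - x i) := by
  classical
  induction s using Finset.induction_on with
  | empty => simp
  | insert a s ha ih =>
    simp only [forall_mem_insert] at h0 h1
    rw [sum_insert ha, prod_insert ha]
    have hsum : 0 ≤ x a * ∑ i ∈ s, x i := mul_nonneg h0.1 (sum_nonneg h0.2)
    calc 1 - (x a + ∑ i ∈ s, x i) ≤ (1 - x a) * (1 - ∑ i ∈ s, x i) := by linarith
      _ ≤ (1 - x a) * ∏ i ∈ s, (1 - x i) :=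
        mul_le_mul_of_nonneg_left (ih h0.2 h1.2) (sub_nonneg.2 h1.1)

theorem one_div_four_le_one_sub_inv_rpow_self {x : ℝ} (hx : 2 ≤ x) :
    1 / 4 ≤ (1 - x⁻¹) ^ x := by
  have hx_inv : x⁻¹ ≤ 1 := inv_le_one_of_one_le₀ (by linarith)
  have sqrt_bound : 1 / 2 ≤ (1 - x⁻¹) ^ (x / 2) := by
    have bernoulli := one_add_mul_self_le_rpow_one_add (s := -x⁻¹) (p := x / 2)
      (by linarith) (by linarith)
    rw [← sub_eq_add_neg] at bernoulli
    refine le_trans (le_of_eq ?_) bernoulli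
    field_simp
    norm_num
  calc (1 / 4 : ℝ) = (1 / 2) ^ 2 := by norm_num
    _ ≤ ((1 - x⁻¹) ^ (x / 2)) ^ 2 := by gcongr
    _ = (1 - x⁻¹) ^ x := by
      rw [← Real.rpow_mul_natCast (sub_nonneg.2 hx_inv), Nat.cast_two,
        div_mul_cancel₀ x two_ne_zero]

theorem one_sub_inv_le_one_sub_inv_pow_of_mul_le {x : ℝ} {n j : ℕ} (hx : 1 ≤ x) (hj : j ≠ 0)
    (h : (n * j : ℝ) ≤ x) : 1 - (j : ℝ)⁻¹ ≤ (1 - x⁻¹) ^ n := by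
  have hx_inv : x⁻¹ ≤ 1 := inv_le_one_of_one_le₀ hx
  have hn : n * x⁻¹ ≤ (j : ℝ)⁻¹ := by
    rw [← div_eq_mul_inv, inv_eq_one_div, div_le_div_iff₀ (by linarith) (by positivity)]
    simpa using h
  calc 1 - (j : ℝ)⁻¹ ≤ 1 + n * -x⁻¹ := by linarith
    _ ≤ (1 + -x⁻¹) ^ n := one_add_mul_le_pow (by linarith) n
    _ = (1 - x⁻¹) ^ n := by rw [← sub_eq_add_neg]

theorem one_div_four_mul_le_prod_Icc_one_sub_inv_pow_pow {q : ℝ} (hq : 2 ≤ q) {N : ℕ → ℕ}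
    (hN : ∀ j, (N j * j : ℝ) ≤ q ^ j) {M : ℕ} (hM : 1 ≤ M) :
    1 / (4 * (M : ℝ)) ≤ ∏ j ∈ Icc 1 M, (1 - (q ^ j)⁻¹) ^ N j := by
  induction M, hM using Nat.le_induction with
  | base =>
    have hq_inv : q⁻¹ ≤ 1 / 2 := by simpa using inv_anti₀ two_pos hq
    have hN1 : (N 1 : ℝ) ≤ q := by simpa using hN 1
    calc 1 / (4 * ((1 : ℕ) : ℝ)) = 1 / 4 := by simp
      _ ≤ (1 - q⁻¹) ^ q := one_div_four_le_one_sub_inv_rpow_self hq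
      _ ≤ (1 - q⁻¹) ^ (N 1 : ℝ) :=
        Real.rpow_le_rpow_of_exponent_ge (by linarith) (sub_le_self 1 (by positivity)) hN1
      _ = ∏ j ∈ Icc 1 1, (1 - (q ^ j)⁻¹) ^ N j := by simp
  | succ M hM ih =>
    have hlevel : 1 - ((M + 1 : ℕ) : ℝ)⁻¹ ≤ (1 - (q ^ (M + 1))⁻¹) ^ N (M + 1) :=
      one_sub_inv_le_one_sub_inv_pow_of_mul_le (one_le_pow₀ (by linarith)) M.succ_ne_zero
        (hN (M + 1))
    rw [prod_Icc_succ_top (by lia)]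
    calc 1 / (4 * ((M + 1 : ℕ) : ℝ)) = 1 / (4 * (M : ℝ)) * (1 - ((M + 1 : ℕ) : ℝ)⁻¹) := by
          push_cast
          field_simp
          ring
      _ ≤ _ := mul_le_mul ih hlevel
        (sub_nonneg.2 (inv_le_one_of_one_le₀ (mod_cast M.succ_pos)))
        (le_trans (by positivity) ih)

variable {ι : Type*} {s : Finset ι} {deg : ι → ℕ} {q : ℝ} {L : ℕ}

theorem one_div_four_mul_le_prod_one_sub_inv_pow (hq : 2 ≤ q) (hL : 1 ≤ L)
    (hdeg : ∀ i ∈ s, deg i ∈ Icc 1 L) (hcard : ∀ j, (#{i ∈ s | deg i = j} * j : ℝ) ≤ q ^ j) :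
    1 / (4 * (L : ℝ)) ≤ ∏ i ∈ s, (1 - (q ^ deg i)⁻¹) := by
  refine (one_div_four_mul_le_prod_Icc_one_sub_inv_pow_pow hq hcard hL).trans_eq ?_
  simp_rw [← prod_fiberwise_of_maps_to' hdeg fun j ↦ 1 - (q ^ j)⁻¹, prod_const]

theorem one_sub_inv_le_prod_one_sub_inv_pow (hq : 1 ≤ q) (hdeg : ∀ i ∈ s, L < deg i)
    (hsum : (∑ i ∈ s, deg i : ℝ) ≤ q ^ L) :
    1 - (q * (L + 1))⁻¹ ≤ ∏ i ∈ s, (1 - (q ^ deg i)⁻¹) := by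
  have : 0 < q := by linarith
  have hterm : ∀ i ∈ s, (q ^ deg i)⁻¹ ≤ deg i * (q ^ (L + 1) * (L + 1))⁻¹ := fun i hi ↦ by
    have hi' : L + 1 ≤ deg i := hdeg i hi
    calc (q ^ deg i)⁻¹ = deg i * (q ^ deg i * deg i)⁻¹ := by
          have : (deg i : ℝ) ≠ 0 := Nat.cast_ne_zero.2 (by lia)
          field_simp
      _ ≤ deg i * (q ^ (L + 1) * (L + 1))⁻¹ := by
          gcongr
          exact mod_cast hi'
  have hsum_inv : ∑ i ∈ s, (q ^ deg i)⁻¹ ≤ (q * (L + 1))⁻¹ :=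
    calc ∑ i ∈ s, (q ^ deg i)⁻¹ ≤ (∑ i ∈ s, (deg i : ℝ)) * (q ^ (L + 1) * (L + 1))⁻¹ := by
          rw [sum_mul]
          exact sum_le_sum hterm
      _ ≤ q ^ L * (q ^ (L + 1) * (L + 1))⁻¹ := by gcongr
      _ = (q * (L + 1))⁻¹ := by
          rw [pow_succ]
          field_simp
  calc 1 - (q * (L + 1))⁻¹ ≤ 1 - ∑ i ∈ s, (q ^ deg i)⁻¹ := by linarith
    _ ≤ ∏ i ∈ s, (1 - (q ^ deg i)⁻¹) := one_sub_sum_le_prod_one_sub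
      (fun i _ ↦ by positivity) (fun i _ ↦ inv_le_one_of_one_le₀ (one_le_pow₀ hq))

theorem three_div_sixteen_mul_le_prod_one_sub_inv_pow (hq : 2 ≤ q) (hL : 1 ≤ L)
    (hdeg : ∀ i ∈ s, 1 ≤ deg i) (hcard : ∀ j, (#{i ∈ s | deg i = j} * j : ℝ) ≤ q ^ j)
    (hsum : (∑ i ∈ s, deg i : ℝ) ≤ q ^ L) :
    3 / (16 * (L : ℝ)) ≤ ∏ i ∈ s, (1 - (q ^ deg i)⁻¹) := by
  have hsmall : 1 / (4 * (L : ℝ)) ≤ ∏ i ∈ s with deg i ≤ L, (1 - (q ^ deg i)⁻¹) := by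
    refine one_div_four_mul_le_prod_one_sub_inv_pow hq hL (fun i hi ↦ ?_) fun j ↦ ?_
    · have ⟨his, hiL⟩ := mem_filter.1 hi
      exact mem_Icc.2 ⟨hdeg i his, hiL⟩
    · refine le_trans ?_ (hcard j)
      gcongr
      exact filter_subset _ s
  have hlarge : 3 / 4 ≤ ∏ i ∈ s with ¬deg i ≤ L, (1 - (q ^ deg i)⁻¹) := by
    have hqL : (q * (L + 1))⁻¹ ≤ 1 / 4 := by
      have : (1 : ℝ) ≤ L := mod_cast hL
      rw [one_div]
      exact inv_anti₀ four_pos (by nlinarith)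
    refine le_trans (by linarith) (one_sub_inv_le_prod_one_sub_inv_pow (by linarith) (L := L)
      (fun i hi ↦ not_le.1 (mem_filter.1 hi).2) (le_trans ?_ hsum))
    exact sum_le_sum_of_subset_of_nonneg (filter_subset _ s) fun i _ _ ↦ by positivity
  calc 3 / (16 * (L : ℝ)) = 1 / (4 * (L : ℝ)) * (3 / 4) := by ring
    _ ≤ _ := mul_le_mul hsmall hlarge (by norm_num) (le_trans (by positivity) hsmall)
    _ = ∏ i ∈ s, (1 - (q ^ deg i)⁻¹) := prod_filter_mul_prod_filter_not s _ _

end ProductBounds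

theorem isCoprime_iff_forall_primeFactors_not_dvd {R : Type*} [CommRing R] [IsDomain R]
    [IsPrincipalIdealRing R] [NormalizationMonoid R] {a b : R} (hb : b ≠ 0) :
    IsCoprime a b ↔ ∀ p ∈ primeFactors b, ¬p ∣ a := by
  simp only [mem_primeFactors]
  refine ⟨fun hab p hp hpa ↦ ?_, fun h ↦ ?_⟩
  · exact (prime_of_normalized_factor p hp).not_isUnit
      (hab.isRelPrime hpa (dvd_of_mem_normalizedFactors hp))
  · refine isCoprime_of_irreducible_dvd (fun h0 ↦ hb h0.2) fun z hz hza hzb ↦ ?_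
    obtain ⟨p, hp, hzp⟩ := exists_mem_normalizedFactors_of_dvd hb hz hzb
    exact h p hp (hzp.symm.dvd.trans hza)

theorem sum_natDegree_le_of_pairwise_isCoprime_of_dvd {R : Type*} [CommSemiring R]
    [NoZeroDivisors R] {S : Finset R[X]} {f : R[X]} (hS : (S : Set R[X]).Pairwise IsCoprime)
    (hf : f ≠ 0) (hdvd : ∀ p ∈ S, p ∣ f) : ∑ p ∈ S, p.natDegree ≤ f.natDegree := by
  rw [← natDegree_prod S _ fun p hp ↦ ne_zero_of_dvd_ne_zero hf (hdvd p hp)]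
  exact natDegree_le_of_dvd (prod_dvd_of_coprime hS hdvd) hf

theorem pairwise_primeFactors_isCoprime {R : Type*} [CommRing R] [IsDomain R]
    [IsPrincipalIdealRing R] [NormalizationMonoid R] {a : R} :
    (primeFactors a : Set R).Pairwise IsCoprime :=
  pairwise_primeFactors_isRelPrime.imp fun _ _ ↦ IsRelPrime.isCoprime

theorem sum_natDegree_primeFactors_le {F : Type*} [Field F] [DecidableEq F] {f : F[X]}
    (hf : f ≠ 0) : ∑ p ∈ primeFactors f, p.natDegree ≤ f.natDegree :=
  sum_natDegree_le_of_pairwise_isCoprime_of_dvd pairwise_primeFactors_isCoprime hf fun _ hp ↦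
    dvd_of_mem_normalizedFactors (mem_primeFactors.1 hp)

theorem degree_mul_lt_iff {R : Type*} [Semiring R] [NoZeroDivisors R] {a g : R[X]} {n : ℕ}
    (ha : a ≠ 0) (han : a.natDegree ≤ n) :
    (a * g).degree < n ↔ g.degree < (n - a.natDegree : ℕ) := by
  conv_lhs => rw [degree_mul, degree_eq_natDegree ha, ← Nat.add_sub_cancel' han, Nat.cast_add]
  exact WithBot.add_lt_add_iff_left (WithBot.natCast_ne_bot _)

open scoped Classical in
theorem card_filter_sum_C_mul_X_pow {R : Type*} [Semiring R] [Fintype R] (n : ℕ)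
    (P : R[X] → Prop) :
    #{c : Fin n → R | P (∑ i, C (c i) * X ^ (i : ℕ))} = {g : R[X] | g.degree < n ∧ P g}.ncard := by
  have hsymm (c : Fin n → R) :
      (∑ i, C (c i) * X ^ (i : ℕ) : R[X]) = (degreeLTEquiv R n).symm c := by
    simp [degreeLTEquiv, C_mul_X_pow_eq_monomial]
  have hinj : Function.Injective fun c : Fin n → R ↦ ((degreeLTEquiv R n).symm c : R[X]) :=
    Subtype.val_injective.comp (degreeLTEquiv R n).symm.injective
  simp_rw [hsymm]
  rw [← Set.ncard_coe_finset, ← Set.ncard_image_of_injective _ hinj]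
  congr 1
  ext g
  simp only [coe_filter_univ, Set.mem_image, Set.mem_ofPred_eq]
  constructor
  · rintro ⟨c, hc, rfl⟩
    exact ⟨mem_degreeLT.1 ((degreeLTEquiv R n).symm c).2, hc⟩
  · rintro ⟨hdeg, hg⟩
    exact ⟨degreeLTEquiv R n ⟨g, mem_degreeLT.2 hdeg⟩, by simpa using hg, by simp⟩

section Sieve

variable {R : Type*} [CommSemiring R]

/-- The polynomials of degree `< n` that survive sieving by `S`, that is, that are divisible by no
element of `S`. -/
def sifted (S : Finset R[X]) (n : ℕ) : Set R[X] :=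
  {g | g.degree < n ∧ ∀ p ∈ S, ¬p ∣ g}

theorem sifted_insert [DecidableEq R[X]] (S : Finset R[X]) (a : R[X]) (n : ℕ) :
    sifted (insert a S) n = sifted S n \ {g ∈ sifted S n | a ∣ g} := by
  ext g
  simp only [sifted, forall_mem_insert, Set.mem_sdiff, Set.mem_ofPred_eq]
  tauto

theorem finite_sifted [Finite R] (S : Finset R[X]) (n : ℕ) : (sifted S n).Finite := by
  have : Finite (degreeLT R n) := .of_equiv _ (degreeLTEquiv R n).symm.toEquiv
  exact (Set.toFinite (degreeLT R n : Set R[X])).subset fun g hg ↦ mem_degreeLT.2 hg.1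

theorem image_mul_sifted [NoZeroDivisors R] {S : Finset R[X]} {a : R[X]} {n : ℕ} (ha : a ≠ 0)
    (han : a.natDegree ≤ n) (hS : ∀ p ∈ S, IsCoprime p a) :
    (a * ·) '' sifted S (n - a.natDegree) = {g ∈ sifted S n | a ∣ g} := by
  have hmem (g : R[X]) : a * g ∈ sifted S n ↔ g ∈ sifted S (n - a.natDegree) :=
    and_congr (degree_mul_lt_iff ha han) <| forall₂_congr fun p hp ↦
      not_congr ⟨(hS p hp).dvd_of_dvd_mul_left, fun h ↦ h.mul_left a⟩
  ext g
  constructor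
  · rintro ⟨h, hh, rfl⟩
    exact ⟨(hmem h).2 hh, dvd_mul_right a h⟩
  · rintro ⟨hg, h, rfl⟩
    exact ⟨h, (hmem h).1 hg, rfl⟩

theorem ncard_sifted_empty [Fintype R] (n : ℕ) :
    (sifted (∅ : Finset R[X]) n).ncard = Fintype.card R ^ n := by
  classical
  simpa [sifted] using (card_filter_sum_C_mul_X_pow (R := R) n fun _ ↦ True).symm

end Sieve

section FiniteField

variable {F : Type*} [Field F] [Fintype F]

theorem ncard_sifted {S : Finset F[X]} (h0 : ∀ p ∈ S, p ≠ 0)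
    (hS : (S : Set F[X]).Pairwise IsCoprime) {n : ℕ} (hn : ∑ p ∈ S, p.natDegree ≤ n) :
    ((sifted S n).ncard : ℝ) =
      (Fintype.card F : ℝ) ^ n * ∏ p ∈ S, (1 - ((Fintype.card F : ℝ) ^ p.natDegree)⁻¹) := by
  classical
  induction S using Finset.induction_on generalizing n with
  | empty => simp [ncard_sifted_empty]
  | insert a S haS ih =>
    rw [forall_mem_insert] at h0
    rw [coe_insert, Set.pairwise_insert_of_symm_of_notMem haS] at hS
    rw [sum_insert haS] at hn
    have hmultiples := image_mul_sifted h0.1 (by lia : a.natDegree ≤ n) fun p hp ↦ (hS.2 p hp).symm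
    rw [sifted_insert, Set.cast_ncard_sdiff (Set.sep_subset _ _) (finite_sifted S n), ← hmultiples,
      Set.ncard_image_of_injective _ (mul_right_injective₀ h0.1), ih h0.2 hS.1 (by lia),
      ih h0.2 hS.1 (by lia), prod_insert haS, pow_sub₀ _ (by simp) (by lia)]
    ring

theorem ncard_degree_lt_and_isCoprime [DecidableEq F] {μ : F[X]} (hμ : μ ≠ 0) {n : ℕ}
    (hn : μ.natDegree ≤ n) :
    ({g : F[X] | g.degree < n ∧ IsCoprime g μ}.ncard : ℝ) =
      (Fintype.card F : ℝ) ^ n *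
        ∏ p ∈ primeFactors μ, (1 - ((Fintype.card F : ℝ) ^ p.natDegree)⁻¹) := by
  simp_rw [isCoprime_iff_forall_primeFactors_not_dvd hμ]
  exact ncard_sifted (fun p hp ↦ (prime_of_normalized_factor p (mem_primeFactors.1 hp)).ne_zero)
    pairwise_primeFactors_isCoprime ((sum_natDegree_primeFactors_le hμ).trans hn)

theorem card_filter_natDegree_eq_mul_le_card_pow {S : Finset F[X]} (hirr : ∀ p ∈ S, Irreducible p)
    (hS : (S : Set F[X]).Pairwise IsCoprime) (j : ℕ) :
    #{p ∈ S | p.natDegree = j} * j ≤ Fintype.card F ^ j := by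
  obtain rfl | hj := eq_or_ne j 0
  · simp
  have hq : 1 < Fintype.card F := Fintype.one_lt_card
  calc #{p ∈ S | p.natDegree = j} * j = ∑ p ∈ S with p.natDegree = j, p.natDegree :=
        (sum_const_nat fun p hp ↦ (mem_filter.1 hp).2).symm
    _ ≤ (X ^ Fintype.card F ^ j - X : F[X]).natDegree := by
      refine sum_natDegree_le_of_pairwise_isCoprime_of_dvd (hS.mono (filter_subset _ S))
        (FiniteField.X_pow_card_pow_sub_X_ne_zero F hj hq) fun p hp ↦ ?_
      obtain ⟨hpS, rfl⟩ := mem_filter.1 hp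
      rw [← Nat.card_eq_fintype_card]
      exact (hirr p hpS).natDegree_dvd_iff_dvd_X_pow_card_pow_sub_X.1 dvd_rfl
    _ = Fintype.card F ^ j := FiniteField.X_pow_card_pow_sub_X_natDegree_eq F hj hq

theorem three_div_sixteen_mul_le_prod_primeFactors [DecidableEq F] {μ : F[X]} (hμ : μ ≠ 0)
    {L : ℕ} (hL : 1 ≤ L) (hdeg : μ.natDegree ≤ Fintype.card F ^ L) :
    3 / (16 * (L : ℝ)) ≤
      ∏ p ∈ primeFactors μ, (1 - ((Fintype.card F : ℝ) ^ p.natDegree)⁻¹) := by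
  have hirr : ∀ p ∈ primeFactors μ, Irreducible p := fun p hp ↦
    irreducible_of_normalized_factor p (mem_primeFactors.1 hp)
  exact three_div_sixteen_mul_le_prod_one_sub_inv_pow (mod_cast Fintype.one_lt_card) hL
    (fun p hp ↦ (hirr p hp).natDegree_pos)
    (fun j ↦ mod_cast card_filter_natDegree_eq_mul_le_card_pow hirr
      pairwise_primeFactors_isCoprime j)
    (mod_cast (sum_natDegree_primeFactors_le hμ).trans hdeg)

open scoped Classical in
theorem prob_coprime_ge_general {μ : F[X]} (hμ : 1 ≤ μ.natDegree) {n : ℕ} (hn : μ.natDegree ≤ n) :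
    1 / (6 * (Nat.clog (Fintype.card F) μ.natDegree : ℝ)) ≤
      (#{c : Fin n → F | IsCoprime (∑ i, C (c i) * X ^ (i : ℕ)) μ} : ℝ) /
        (Fintype.card F : ℝ) ^ n := by
  have hμ0 : μ ≠ 0 := ne_zero_of_natDegree_gt hμ
  set L := Nat.clog (Fintype.card F) μ.natDegree
  obtain hL | hL := Nat.eq_zero_or_pos L
  -- If `deg μ = 1`, then `L = 0` and the left-hand side is `1 / 0 = 0`.
  · simp only [hL, Nat.cast_zero, mul_zero, div_zero]
    positivity
  have hdeg : μ.natDegree ≤ Fintype.card F ^ L := Nat.le_pow_clog Fintype.one_lt_card _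
  rw [card_filter_sum_C_mul_X_pow n (IsCoprime · μ), ncard_degree_lt_and_isCoprime hμ0 hn,
    mul_div_cancel_left₀ _ (by simp)]
  calc 1 / (6 * (L : ℝ)) ≤ 3 / (16 * (L : ℝ)) := by
        rw [div_le_div_iff₀ (by positivity) (by positivity)]
        linarith
    _ ≤ ∏ p ∈ primeFactors μ, (1 - ((Fintype.card F : ℝ) ^ p.natDegree)⁻¹) :=
      three_div_sixteen_mul_le_prod_primeFactors hμ0 hL hdeg

end FiniteField

open Polynomial in
open scoped Classical in
/-- Over a finite field with `q` elements, if `μ` is a monic polynomial of degree `d ≥ 1`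
and `g` is a uniformly random polynomial of degree `< d` (a uniform element of
`F[X]/(μ)`), then `Pr[gcd(g, μ) = 1] ≥ 1/(6⌈log_q d⌉)`. -/
theorem prob_coprime_ge (F : Type) [Field F] [Fintype F]
    (μ : Polynomial F) (hμ : μ.Monic) (d : ℕ) (hd : d = μ.natDegree) (hd1 : 1 ≤ d) :
    1 / (6 * (Nat.clog (Fintype.card F) d : ℝ)) ≤
      ((Finset.univ.filter
          (fun c : Fin d → F =>
            IsCoprime (∑ i : Fin d, Polynomial.C (c i) * Polynomial.X ^ (i : ℕ)) μ)).card : ℝ) /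
        (Fintype.card F : ℝ) ^ d := by
  subst hd
  exact prob_coprime_ge_general hd1 le_rfl
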